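/- arXiv:1610.00166 — 2 statements merged into one kernel-verified Lean document; each statement's English description precedes it below -/
import Mathlib

section
/- With F, u, J₁, J₂, J, B = ℍ[F; u, J], V = B × B, the form ⟨·,·⟩ and the maps I₁, K₁, I₂, K₂ as in the context, define for α = a + b·i + c·j + d·ij ∈ ℍ[F; u, J₁] the endomorphism ρ₁(α) := a·id + b·I₁ + c·K₁ + d·(I₁∘K₁) of V, and for α = a + b·i + c·j + d·ij ∈ ℍ[F; u, J₂] the endomorphism ρ₂(α) := a·id + b·I₂ + c·K₂ + d·(I₂∘K₂). Then for k ∈ {1,2}, for every α in the respective quaternion algebra and all x, y ∈ V: ⟨ρₖ(α)x, y⟩ = ⟨x, ρₖ(star α)y⟩, and consequently ⟨ρₖ(α)x, ρₖ(α)y⟩ = νₖ(α)·⟨x,y⟩, where ν₁(a + b·i + c·j + d·ij) = a² − u b² − J₁ c² + u J₁ d² and ν₂(a + b·i + c·j + d·ij) = a² − u b² − J₂ c² + u J₂ d² are the reduced norms. In particular the units of ℍ[F; u, J₁] and ℍ[F; u, J₂] act on V as B-linear similitudes of ⟨·,·⟩ with similitude factors their reduced norms. -/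
/-!
The maps `Iₖ, Kₖ` satisfy the quaternion relations of `Bₖ`, so by the universal property of the
quaternion algebra `ρₖ` is an algebra homomorphism from `Bₖ` to the `B`-linear endomorphisms of `V`.
As `Iₖ` and `Kₖ` anticommute and are skew-adjoint for the form, so is `Iₖ ∘ Kₖ`; hence `ρₖ (star α)`
is adjoint to `ρₖ α`, and `⟨ρₖ(α)x, ρₖ(α)y⟩ = ⟨x, ρₖ(star α * α)y⟩` with `star α * α = νₖ(α)`.
-/

open scoped Quaternion

noncomputable section

namespace QuaternionSkewHermitianModel

variable (F : Type*) [Field F]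

/-- The element `i` of the quaternion algebra `ℍ[F, u, J]`. -/
def qi (u J : F) : ℍ[F, u, J] := ⟨0, 1, 0, 0⟩

/-- The element `j` of the quaternion algebra `ℍ[F, u, J]`. -/
def qj (u J : F) : ℍ[F, u, J] := ⟨0, 0, 1, 0⟩

variable (u J₁ J₂ : F)

/-- `V = B × B` with `B = ℍ[F, u, J₁J₂]`, the explicit model of the skew-hermitian
`B`-space `B₁ ⊗_E B₂`. -/
abbrev V := ℍ[F, u, J₁ * J₂] × ℍ[F, u, J₁ * J₂]

/-- The `B`-valued form `⟨(x₁,x₂),(y₁,y₂)⟩ = star x₁ · i · y₁ − J₁ (star x₂ · i · y₂)`. -/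
def bform (x y : V F u J₁ J₂) : ℍ[F, u, J₁ * J₂] :=
  star x.1 * qi F u (J₁ * J₂) * y.1 - J₁ • (star x.2 * qi F u (J₁ * J₂) * y.2)

/-- The operator `I₁ (x₁, x₂) = (i x₁, −(i x₂))`. -/
def I₁ (x : V F u J₁ J₂) : V F u J₁ J₂ :=
  (qi F u (J₁ * J₂) * x.1, -(qi F u (J₁ * J₂) * x.2))

/-- The operator `K₁ (x₁, x₂) = (J₁ x₂, x₁)`. -/
def K₁ (x : V F u J₁ J₂) : V F u J₁ J₂ := (J₁ • x.2, x.1)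

/-- The operator `I₂ (x₁, x₂) = (i x₁, i x₂)`. -/
def I₂ (x : V F u J₁ J₂) : V F u J₁ J₂ :=
  (qi F u (J₁ * J₂) * x.1, qi F u (J₁ * J₂) * x.2)

/-- The operator `K₂ (x₁, x₂) = (j x₂, J₁⁻¹ (j x₁))`. -/
def K₂ (x : V F u J₁ J₂) : V F u J₁ J₂ :=
  (qj F u (J₁ * J₂) * x.2, J₁⁻¹ • (qj F u (J₁ * J₂) * x.1))

/-- The action `ρ₁ (a + b i + c j + d ij) = a·id + b·I₁ + c·K₁ + d·(I₁ ∘ K₁)` of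
`B₁ = ℍ[F, u, J₁]` on `V`. -/
def ρ₁ (α : ℍ[F, u, J₁]) (x : V F u J₁ J₂) : V F u J₁ J₂ :=
  α.re • x + α.imI • I₁ F u J₁ J₂ x + α.imJ • K₁ F u J₁ J₂ x
    + α.imK • I₁ F u J₁ J₂ (K₁ F u J₁ J₂ x)

/-- The action `ρ₂ (a + b i + c j + d ij) = a·id + b·I₂ + c·K₂ + d·(I₂ ∘ K₂)` of
`B₂ = ℍ[F, u, J₂]` on `V`. -/
def ρ₂ (α : ℍ[F, u, J₂]) (x : V F u J₁ J₂) : V F u J₁ J₂ :=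
  α.re • x + α.imI • I₂ F u J₁ J₂ x + α.imJ • K₂ F u J₁ J₂ x
    + α.imK • I₂ F u J₁ J₂ (K₂ F u J₁ J₂ x)

/-- The reduced norm of `B₁ = ℍ[F, u, J₁]`. -/
def ν₁ (α : ℍ[F, u, J₁]) : F :=
  α.re ^ 2 - u * α.imI ^ 2 - J₁ * α.imJ ^ 2 + u * J₁ * α.imK ^ 2

/-- The reduced norm of `B₂ = ℍ[F, u, J₂]`. -/
def ν₂ (α : ℍ[F, u, J₂]) : F :=
  α.re ^ 2 - u * α.imI ^ 2 - J₂ * α.imJ ^ 2 + u * J₂ * α.imK ^ 2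

section General

open LinearMap

variable {R : Type*} [CommRing R] {c₁ c₂ c₃ : R}

lemma re_star_mul_self (α : ℍ[R,c₁,c₃]) :
    (star α * α).re = α.re ^ 2 - c₁ * α.imI ^ 2 - c₃ * α.imJ ^ 2 + c₁ * c₃ * α.imK ^ 2 := by
  simp only [QuaternionAlgebra.re_mul, QuaternionAlgebra.re_star, QuaternionAlgebra.imI_star,
    QuaternionAlgebra.imJ_star, QuaternionAlgebra.imK_star]
  ring

lemma basis_lift_star_mul_self {A : Type*} [Ring A] [Algebra R A]
    (q : QuaternionAlgebra.Basis A c₁ c₂ c₃) (α : ℍ[R,c₁,c₂,c₃]) :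
    q.lift (star α) * q.lift α = (star α * α).re • 1 := by
  rw [← q.lift_mul, α.star_mul_eq_coe, QuaternionAlgebra.re_coe,
    ← Algebra.algebraMap_eq_smul_one]
  exact q.liftHom.commutes _

variable {S W M : Type*} [Semiring S] [AddCommGroup W] [Module R W] [Module S W]
  [SMulCommClass S R W] [AddCommGroup M] [Module R M] {β : W →ₗ[R] W →ₗ[R] M}

lemma isAdjointPair_zero_smul_one_sub {f : Module.End S W} (hf : β.IsSkewAdjoint f) :
    IsAdjointPair β β f ((0 : R) • 1 - f : Module.End S W) := by
  rwa [zero_smul, zero_sub]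

variable [SMul R S] [IsScalarTower R S W]
  (q : QuaternionAlgebra.Basis (Module.End S W) c₁ c₂ c₃)

-- In `hi`, `c₂ • 1 - q.i` is the image under `q.lift` of the conjugate `star i = c₂ - i`.
lemma isSkewAdjoint_basis_k (hi : IsAdjointPair β β q.i (c₂ • 1 - q.i : Module.End S W))
    (hj : β.IsSkewAdjoint q.j) : β.IsSkewAdjoint q.k := by
  intro x y
  have adjoint_mul : -q.j * (c₂ • 1 - q.i) = -q.k := by
    rw [mul_sub, mul_smul_comm, mul_one, neg_mul, q.j_mul_i]
    module
  calc
    β (q.k x) y = β (q.i (q.j x)) y := by rw [← q.i_mul_j, Module.End.mul_apply]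
    _ = β x ((-q.j * (c₂ • 1 - q.i)) y) := by rw [hi, hj]; rfl
    _ = β x ((-q.k) y) := by rw [adjoint_mul]

theorem isAdjointPair_basis_lift_star
    (hi : IsAdjointPair β β q.i (c₂ • 1 - q.i : Module.End S W)) (hj : β.IsSkewAdjoint q.j)
    (α : ℍ[R,c₁,c₂,c₃]) : IsAdjointPair β β (q.lift α) (q.lift (star α)) := by
  intro x y
  have hix := hi x y
  have hjx := hj x y
  have hkx := isSkewAdjoint_basis_k q hi hj x y
  simp only [LinearMap.sub_apply, LinearMap.smul_apply, Module.End.one_apply, Pi.neg_apply,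
    map_sub, map_neg, map_smul] at hix hjx hkx
  simp only [QuaternionAlgebra.Basis.lift, Algebra.algebraMap_eq_smul_one, LinearMap.add_apply,
    LinearMap.smul_apply, Module.End.one_apply, map_add, map_smul, hix, hjx, hkx,
    QuaternionAlgebra.re_star, QuaternionAlgebra.imI_star, QuaternionAlgebra.imJ_star,
    QuaternionAlgebra.imK_star]
  module

theorem apply_basis_lift_basis_lift
    (hi : IsAdjointPair β β q.i (c₂ • 1 - q.i : Module.End S W)) (hj : β.IsSkewAdjoint q.j)
    (α : ℍ[R,c₁,c₂,c₃]) (x y : W) :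
    β (q.lift α x) (q.lift α y) = (star α * α).re • β x y := by
  rw [isAdjointPair_basis_lift_star q hi hj, ← Module.End.mul_apply, basis_lift_star_mul_self,
    LinearMap.smul_apply, Module.End.one_apply, map_smul]

end General

section Model

open LinearMap MulOpposite

variable {F u J₁ J₂} {J : F}

lemma star_qi : star (qi F u J) = -qi F u J := by
  ext <;> simp [qi]

lemma star_qj : star (qj F u J) = -qj F u J := by
  ext <;> simp [qj]

lemma qi_mul_qi_mul (x : ℍ[F,u,J]) : qi F u J * (qi F u J * x) = u • x := by
  have qi_mul_qi : qi F u J * qi F u J = u • 1 := by ext <;> simp [qi]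
  rw [← mul_assoc, qi_mul_qi, smul_one_mul]

lemma qj_mul_qj_mul (x : ℍ[F,u,J]) : qj F u J * (qj F u J * x) = J • x := by
  have qj_mul_qj : qj F u J * qj F u J = J • 1 := by ext <;> simp [qj]
  rw [← mul_assoc, qj_mul_qj, smul_one_mul]

lemma qj_mul_qi_mul (x : ℍ[F,u,J]) :
    qj F u J * (qi F u J * x) = -(qi F u J * (qj F u J * x)) := by
  have qj_mul_qi : qj F u J * qi F u J = -(qi F u J * qj F u J) := by ext <;> simp [qi, qj]
  rw [← mul_assoc, qj_mul_qi, neg_mul, mul_assoc]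

lemma I₁_I₁ (x : V F u J₁ J₂) : I₁ F u J₁ J₂ (I₁ F u J₁ J₂ x) = u • x := by
  ext1 <;> simp [I₁, qi_mul_qi_mul]

lemma K₁_K₁ (x : V F u J₁ J₂) : K₁ F u J₁ J₂ (K₁ F u J₁ J₂ x) = J₁ • x := by
  ext1 <;> simp [K₁]

lemma K₁_I₁ (x : V F u J₁ J₂) :
    K₁ F u J₁ J₂ (I₁ F u J₁ J₂ x) = -I₁ F u J₁ J₂ (K₁ F u J₁ J₂ x) := by
  ext1 <;> simp [I₁, K₁]

lemma I₂_I₂ (x : V F u J₁ J₂) : I₂ F u J₁ J₂ (I₂ F u J₁ J₂ x) = u • x := by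
  ext1 <;> simp [I₂, qi_mul_qi_mul]

lemma K₂_K₂ (hJ₁ : J₁ ≠ 0) (x : V F u J₁ J₂) :
    K₂ F u J₁ J₂ (K₂ F u J₁ J₂ x) = J₂ • x := by
  ext1 <;> simp [K₂, qj_mul_qj_mul, smul_smul, hJ₁]

lemma K₂_I₂ (x : V F u J₁ J₂) :
    K₂ F u J₁ J₂ (I₂ F u J₁ J₂ x) = -I₂ F u J₁ J₂ (K₂ F u J₁ J₂ x) := by
  ext1 <;> simp [I₂, K₂, qj_mul_qi_mul]

variable (F u J₁ J₂)

/-- The form `⟨·, ·⟩` bundled as an `F`-bilinear map, so that adjointness can be expressed by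
`LinearMap.IsAdjointPair`. -/
def bformₗ : V F u J₁ J₂ →ₗ[F] V F u J₁ J₂ →ₗ[F] ℍ[F,u,J₁ * J₂] :=
  LinearMap.mk₂ F (bform F u J₁ J₂)
    (fun x x' y => by simp only [bform, Prod.fst_add, Prod.snd_add, star_add, add_mul]; module)
    (fun c x y => by
      simp only [bform, Prod.smul_fst, Prod.smul_snd, QuaternionAlgebra.star_smul, smul_mul_assoc]
      module)
    (fun x y y' => by simp only [bform, Prod.fst_add, Prod.snd_add, mul_add]; module)
    (fun c x y => by simp only [bform, Prod.smul_fst, Prod.smul_snd, mul_smul_comm]; module)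

lemma isSkewAdjoint_I₁ : (bformₗ F u J₁ J₂).IsSkewAdjoint (I₁ F u J₁ J₂) := by
  intro x y
  simp [bformₗ, bform, I₁, star_qi, mul_assoc]

lemma isSkewAdjoint_K₁ : (bformₗ F u J₁ J₂).IsSkewAdjoint (K₁ F u J₁ J₂) := by
  intro x y
  simp [bformₗ, bform, K₁, sub_eq_add_neg, add_comm]

lemma isSkewAdjoint_I₂ : (bformₗ F u J₁ J₂).IsSkewAdjoint (I₂ F u J₁ J₂) := by
  intro x y
  simp [bformₗ, bform, I₂, star_qi, mul_assoc]

variable {J₁} in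
lemma isSkewAdjoint_K₂ (hJ₁ : J₁ ≠ 0) :
    (bformₗ F u J₁ J₂).IsSkewAdjoint (K₂ F u J₁ J₂) := by
  intro x y
  simp [bformₗ, bform, K₂, star_qj, mul_assoc, qj_mul_qi_mul, smul_smul, hJ₁,
    sub_eq_add_neg, add_comm]

/-- `I₁` as a `B`-linear endomorphism of `V`. Here and below right `B`-modules are encoded as
modules over `Bᵐᵒᵖ`. -/
@[simps]
def I₁End : Module.End ℍ[F,u,J₁ * J₂]ᵐᵒᵖ (V F u J₁ J₂) where
  toFun := I₁ F u J₁ J₂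
  map_add' x y := by ext1 <;> simp [I₁, mul_add, add_comm]
  map_smul' b x := by ext1 <;> simp [I₁, mul_assoc]

/-- `K₁` as a `B`-linear endomorphism of `V`. -/
@[simps]
def K₁End : Module.End ℍ[F,u,J₁ * J₂]ᵐᵒᵖ (V F u J₁ J₂) where
  toFun := K₁ F u J₁ J₂
  map_add' x y := by ext1 <;> simp [K₁]
  map_smul' b x := by ext1 <;> simp [K₁]

/-- `I₂` as a `B`-linear endomorphism of `V`. -/
@[simps]
def I₂End : Module.End ℍ[F,u,J₁ * J₂]ᵐᵒᵖ (V F u J₁ J₂) where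
  toFun := I₂ F u J₁ J₂
  map_add' x y := by ext1 <;> simp [I₂, mul_add]
  map_smul' b x := by ext1 <;> simp [I₂, mul_assoc]

/-- `K₂` as a `B`-linear endomorphism of `V`. -/
@[simps]
def K₂End : Module.End ℍ[F,u,J₁ * J₂]ᵐᵒᵖ (V F u J₁ J₂) where
  toFun := K₂ F u J₁ J₂
  map_add' x y := by ext1 <;> simp [K₂, mul_add]
  map_smul' b x := by ext1 <;> simp [K₂, mul_assoc]

/-- The quaternion basis of `End_B V` with `i = I₁` and `j = K₁`; its lift to `ℍ[F,u,J₁]` is the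
action `ρ₁`. -/
def basis₁ : QuaternionAlgebra.Basis (Module.End ℍ[F,u,J₁ * J₂]ᵐᵒᵖ (V F u J₁ J₂)) u 0 J₁ where
  i := I₁End F u J₁ J₂
  j := K₁End F u J₁ J₂
  k := I₁End F u J₁ J₂ * K₁End F u J₁ J₂
  i_mul_i := LinearMap.ext fun x => by simp [I₁_I₁]
  j_mul_j := LinearMap.ext fun x => by simp [K₁_K₁]
  i_mul_j := rfl
  j_mul_i := LinearMap.ext fun x => by simp [K₁_I₁]

variable {J₁} in
/-- The quaternion basis of `End_B V` with `i = I₂` and `j = K₂`; its lift to `ℍ[F,u,J₂]` is the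
action `ρ₂`. -/
def basis₂ (hJ₁ : J₁ ≠ 0) :
    QuaternionAlgebra.Basis (Module.End ℍ[F,u,J₁ * J₂]ᵐᵒᵖ (V F u J₁ J₂)) u 0 J₂ where
  i := I₂End F u J₁ J₂
  j := K₂End F u J₁ J₂
  k := I₂End F u J₁ J₂ * K₂End F u J₁ J₂
  i_mul_i := LinearMap.ext fun x => by simp [I₂_I₂]
  j_mul_j := LinearMap.ext fun x => by simp [K₂_K₂ hJ₁]
  i_mul_j := rfl
  j_mul_i := LinearMap.ext fun x => by simp [K₂_I₂]

variable {F u J₁ J₂}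

lemma basis₁_lift_apply (α : ℍ[F,u,J₁]) (x : V F u J₁ J₂) :
    (basis₁ F u J₁ J₂).lift α x = ρ₁ F u J₁ J₂ α x :=
  rfl

lemma basis₂_lift_apply (hJ₁ : J₁ ≠ 0) (α : ℍ[F,u,J₂]) (x : V F u J₁ J₂) :
    (basis₂ F u J₂ hJ₁).lift α x = ρ₂ F u J₁ J₂ α x :=
  rfl

theorem bform_ρ₁_left (α : ℍ[F,u,J₁]) (x y : V F u J₁ J₂) :
    bform F u J₁ J₂ (ρ₁ F u J₁ J₂ α x) y = bform F u J₁ J₂ x (ρ₁ F u J₁ J₂ (star α) y) := by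
  simp only [← basis₁_lift_apply]
  exact isAdjointPair_basis_lift_star (basis₁ F u J₁ J₂)
    (isAdjointPair_zero_smul_one_sub (isSkewAdjoint_I₁ F u J₁ J₂))
    (isSkewAdjoint_K₁ F u J₁ J₂) α x y

theorem bform_ρ₁_ρ₁ (α : ℍ[F,u,J₁]) (x y : V F u J₁ J₂) :
    bform F u J₁ J₂ (ρ₁ F u J₁ J₂ α x) (ρ₁ F u J₁ J₂ α y)
      = ν₁ F u J₁ α • bform F u J₁ J₂ x y := by
  simp only [← basis₁_lift_apply, ν₁, ← re_star_mul_self]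
  exact apply_basis_lift_basis_lift (basis₁ F u J₁ J₂)
    (isAdjointPair_zero_smul_one_sub (isSkewAdjoint_I₁ F u J₁ J₂))
    (isSkewAdjoint_K₁ F u J₁ J₂) α x y

theorem ρ₁_op_smul (α : ℍ[F,u,J₁]) (b : ℍ[F,u,J₁ * J₂]) (x : V F u J₁ J₂) :
    ρ₁ F u J₁ J₂ α (op b • x) = op b • ρ₁ F u J₁ J₂ α x := by
  simp only [← basis₁_lift_apply, map_smul]

theorem bform_ρ₂_left (hJ₁ : J₁ ≠ 0) (α : ℍ[F,u,J₂]) (x y : V F u J₁ J₂) :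
    bform F u J₁ J₂ (ρ₂ F u J₁ J₂ α x) y = bform F u J₁ J₂ x (ρ₂ F u J₁ J₂ (star α) y) := by
  simp only [← basis₂_lift_apply hJ₁]
  exact isAdjointPair_basis_lift_star (basis₂ F u J₂ hJ₁)
    (isAdjointPair_zero_smul_one_sub (isSkewAdjoint_I₂ F u J₁ J₂))
    (isSkewAdjoint_K₂ F u J₂ hJ₁) α x y

theorem bform_ρ₂_ρ₂ (hJ₁ : J₁ ≠ 0) (α : ℍ[F,u,J₂]) (x y : V F u J₁ J₂) :
    bform F u J₁ J₂ (ρ₂ F u J₁ J₂ α x) (ρ₂ F u J₁ J₂ α y)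
      = ν₂ F u J₂ α • bform F u J₁ J₂ x y := by
  simp only [← basis₂_lift_apply hJ₁, ν₂, ← re_star_mul_self]
  exact apply_basis_lift_basis_lift (basis₂ F u J₂ hJ₁)
    (isAdjointPair_zero_smul_one_sub (isSkewAdjoint_I₂ F u J₁ J₂))
    (isSkewAdjoint_K₂ F u J₂ hJ₁) α x y

theorem ρ₂_op_smul (α : ℍ[F,u,J₂]) (b : ℍ[F,u,J₁ * J₂]) (x : V F u J₁ J₂) :
    ρ₂ F u J₁ J₂ α (op b • x) = op b • ρ₂ F u J₁ J₂ α x :=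
  map_smul (α.re • 1 + α.imI • I₂End F u J₁ J₂ + α.imJ • K₂End F u J₁ J₂
    + α.imK • (I₂End F u J₁ J₂ * K₂End F u J₁ J₂)) (op b) x

end Model

/-- For `k ∈ {1, 2}` and every `α` in the respective quaternion algebra:
`⟨ρₖ(α)x, y⟩ = ⟨x, ρₖ(star α)y⟩`, and consequently
`⟨ρₖ(α)x, ρₖ(α)y⟩ = νₖ(α)·⟨x, y⟩` with `νₖ` the reduced norm; in particular the units of
`ℍ[F, u, J₁]` and `ℍ[F, u, J₂]` act on `V` as `B`-linear similitudes of the form. -/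
theorem statement_5 (hu : u ≠ 0) (hJ₁ : J₁ ≠ 0) (hJ₂ : J₂ ≠ 0) :
    -- adjoint property for `ρ₁`
    (∀ (α : ℍ[F, u, J₁]) (x y : V F u J₁ J₂),
        bform F u J₁ J₂ (ρ₁ F u J₁ J₂ α x) y
          = bform F u J₁ J₂ x (ρ₁ F u J₁ J₂ (star α) y)) ∧
    -- similitude property for `ρ₁`
    (∀ (α : ℍ[F, u, J₁]) (x y : V F u J₁ J₂),
        bform F u J₁ J₂ (ρ₁ F u J₁ J₂ α x) (ρ₁ F u J₁ J₂ α y)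
          = ν₁ F u J₁ α • bform F u J₁ J₂ x y) ∧
    -- `ρ₁ α` is right `B`-linear
    (∀ (α : ℍ[F, u, J₁]) (x : V F u J₁ J₂) (b : ℍ[F, u, J₁ * J₂]),
        ρ₁ F u J₁ J₂ α (x.1 * b, x.2 * b)
          = ((ρ₁ F u J₁ J₂ α x).1 * b, (ρ₁ F u J₁ J₂ α x).2 * b)) ∧
    -- adjoint property for `ρ₂`
    (∀ (α : ℍ[F, u, J₂]) (x y : V F u J₁ J₂),
        bform F u J₁ J₂ (ρ₂ F u J₁ J₂ α x) y
          = bform F u J₁ J₂ x (ρ₂ F u J₁ J₂ (star α) y)) ∧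
    -- similitude property for `ρ₂`
    (∀ (α : ℍ[F, u, J₂]) (x y : V F u J₁ J₂),
        bform F u J₁ J₂ (ρ₂ F u J₁ J₂ α x) (ρ₂ F u J₁ J₂ α y)
          = ν₂ F u J₂ α • bform F u J₁ J₂ x y) ∧
    -- `ρ₂ α` is right `B`-linear
    (∀ (α : ℍ[F, u, J₂]) (x : V F u J₁ J₂) (b : ℍ[F, u, J₁ * J₂]),
        ρ₂ F u J₁ J₂ α (x.1 * b, x.2 * b)
          = ((ρ₂ F u J₁ J₂ α x).1 * b, (ρ₂ F u J₁ J₂ α x).2 * b)) :=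
  ⟨bform_ρ₁_left, bform_ρ₁_ρ₁, fun α x b => ρ₁_op_smul α b x,
    bform_ρ₂_left hJ₁, bform_ρ₂_ρ₂ hJ₁, fun α x b => ρ₂_op_smul α b x⟩

end QuaternionSkewHermitianModel
end
end

section
/- Let q > 1 be a real number and let γ be a complex number with |γ| = 1 and γ ≠ 1. Then the series Σ_{i=1}^∞ q^{−i}·(γ^i·(1 − γ^{−1}q^{−1})/(1 − γ^{−1}) + γ^{−i}·(1 − γq^{−1})/(1 − γ)) converges and 1 + Σ_{i=1}^∞ q^{−i}·(γ^i·(1 − γ^{−1}q^{−1})/(1 − γ^{−1}) + γ^{−i}·(1 − γq^{−1})/(1 − γ)) = (1 + q^{−1})·(1 − q^{−2}) / ((1 − γq^{−1})·(1 − γ^{−1}q^{−1})). -/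
/-!
Put `x = q⁻¹`. Extended to `i = 0`, the series is a linear combination of the geometric series with
ratios `γ x` and `γ⁻¹ x`, weighted by the values at `γ` and `γ⁻¹` of the function
`c(γ) = (1 - γ⁻¹ x) / (1 - γ⁻¹)`. Since `c(γ) + c(γ⁻¹) = 1 + x`, the term at `i = 0` is `1 + x`
rather than `1`, so the quantity to evaluate is
`c(γ) / (1 - γ x) + c(γ⁻¹) / (1 - γ⁻¹ x) - x`. The poles at `γ = 1` of its two fractions
cancel, which leaves the closed form.
-/

section CFunction

variable {𝕜 : Type*} [Field 𝕜] {x γ : 𝕜}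

/-- The coefficient `c(γ)` of `γ ^ i` in Macdonald's formula for the unramified spherical function
of a split rank one group, where `γ` is the ratio of the Satake parameters and `x` is the inverse
`q⁻¹` of the residue cardinality. The coefficient of `γ⁻¹ ^ i` is `c(γ⁻¹)`. -/
def macdonaldC (x γ : 𝕜) : 𝕜 := (1 - γ⁻¹ * x) / (1 - γ⁻¹)

lemma macdonaldC_eq_sub_div_sub_one (hγ : γ ≠ 0) : macdonaldC x γ = (γ - x) / (γ - 1) := by
  rw [macdonaldC, ← mul_div_mul_left _ _ hγ]
  simp only [mul_sub, mul_one, mul_inv_cancel_left₀ hγ, mul_inv_cancel₀ hγ]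

lemma macdonaldC_inv : macdonaldC x γ⁻¹ = (1 - γ * x) / (1 - γ) := by
  rw [macdonaldC, inv_inv]

lemma macdonaldC_add_macdonaldC_inv (hγ₀ : γ ≠ 0) (hγ₁ : γ ≠ 1) :
    macdonaldC x γ + macdonaldC x γ⁻¹ = 1 + x := by
  have hsub : γ - 1 ≠ 0 := sub_ne_zero.mpr hγ₁
  rw [macdonaldC_eq_sub_div_sub_one hγ₀, macdonaldC_inv, ← neg_sub γ 1]
  field_simp
  ring

lemma macdonaldC_mul_add_macdonaldC_inv_mul (hγ₀ : γ ≠ 0) (hγ₁ : γ ≠ 1) :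
    macdonaldC x γ * (1 - γ⁻¹ * x) + (1 - γ * x) * macdonaldC x γ⁻¹ =
      (1 + x) * (1 - x ^ 2) + x * ((1 - γ * x) * (1 - γ⁻¹ * x)) := by
  have hsub : γ - 1 ≠ 0 := sub_ne_zero.mpr hγ₁
  rw [macdonaldC_eq_sub_div_sub_one hγ₀, macdonaldC_inv, ← neg_sub γ 1]
  field_simp
  ring

lemma macdonaldC_div_add_macdonaldC_inv_div (hγ₀ : γ ≠ 0) (hγ₁ : γ ≠ 1)
    (h : 1 - γ * x ≠ 0) (h' : 1 - γ⁻¹ * x ≠ 0) :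
    macdonaldC x γ / (1 - γ * x) + macdonaldC x γ⁻¹ / (1 - γ⁻¹ * x) =
      (1 + x) * (1 - x ^ 2) / ((1 - γ * x) * (1 - γ⁻¹ * x)) + x := by
  rw [div_add_div _ _ h h', macdonaldC_mul_add_macdonaldC_inv_mul hγ₀ hγ₁, add_div,
    mul_div_cancel_right₀ x (mul_ne_zero h h')]

end CFunction

section Series

variable {𝕜 : Type*} [NormedField 𝕜] {x γ : 𝕜}

lemma hasSum_pow_mul_pow_mul_add {α β : 𝕜} (hα : ‖α * x‖ < 1) (hβ : ‖β * x‖ < 1) (a b : 𝕜) :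
    HasSum (fun i : ℕ => x ^ i * (α ^ i * a + β ^ i * b)) (a / (1 - α * x) + b / (1 - β * x)) := by
  have hsum := ((hasSum_geometric_of_norm_lt_one hα).mul_left a).add
    ((hasSum_geometric_of_norm_lt_one hβ).mul_left b)
  simp only [← div_eq_mul_inv] at hsum
  refine hsum.congr_fun fun i => ?_
  ring

lemma one_sub_ne_zero_of_norm_lt_one {R : Type*} [SeminormedRing R] [NormOneClass R] {z : R}
    (hz : ‖z‖ < 1) : 1 - z ≠ 0 :=
  sub_ne_zero.mpr fun h => by simp [← h] at hz

lemma hasSum_macdonald_succ (hγ₀ : γ ≠ 0) (hγ₁ : γ ≠ 1) (h : ‖γ * x‖ < 1) (h' : ‖γ⁻¹ * x‖ < 1) :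
    HasSum
      (fun i : ℕ =>
        x ^ (i + 1) * (γ ^ (i + 1) * macdonaldC x γ + γ⁻¹ ^ (i + 1) * macdonaldC x γ⁻¹))
      ((1 + x) * (1 - x ^ 2) / ((1 - γ * x) * (1 - γ⁻¹ * x)) - 1) := by
  have hsum := hasSum_pow_mul_pow_mul_add h h' (macdonaldC x γ) (macdonaldC x γ⁻¹)
  have hvalue := macdonaldC_div_add_macdonaldC_inv_div hγ₀ hγ₁
    (one_sub_ne_zero_of_norm_lt_one h) (one_sub_ne_zero_of_norm_lt_one h')
  have hterm_zero : x ^ 0 * (γ ^ 0 * macdonaldC x γ + γ⁻¹ ^ 0 * macdonaldC x γ⁻¹) = 1 + x := by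
    simp only [pow_zero, one_mul, macdonaldC_add_macdonaldC_inv hγ₀ hγ₁]
  rw [hvalue, ← hasSum_nat_add_iff' 1, Finset.sum_range_one, hterm_zero,
    add_sub_add_right_eq_sub] at hsum
  exact hsum

end Series

theorem unramified_doubling_series_general {𝕜 : Type*} [NormedField 𝕜] {q γ : 𝕜}
    (hγ₀ : γ ≠ 0) (hγ₁ : γ ≠ 1) (h : ‖γ‖ < ‖q‖) (h' : ‖γ⁻¹‖ < ‖q‖) :
    Summable (fun i : ℕ =>
        q⁻¹ ^ (i + 1) *
          (γ ^ (i + 1) * ((1 - γ⁻¹ * q⁻¹) / (1 - γ⁻¹)) +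
            γ⁻¹ ^ (i + 1) * ((1 - γ * q⁻¹) / (1 - γ)))) ∧
    1 + (∑' i : ℕ,
        q⁻¹ ^ (i + 1) *
          (γ ^ (i + 1) * ((1 - γ⁻¹ * q⁻¹) / (1 - γ⁻¹)) +
            γ⁻¹ ^ (i + 1) * ((1 - γ * q⁻¹) / (1 - γ))))
      = (1 + q⁻¹) * (1 - q⁻¹ ^ 2) / ((1 - γ * q⁻¹) * (1 - γ⁻¹ * q⁻¹)) := by
  have norm_mul_inv_lt_one {z : 𝕜} (hz : ‖z‖ < ‖q‖) : ‖z * q⁻¹‖ < 1 := by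
    rw [← div_eq_mul_inv, norm_div]
    exact (div_lt_one ((norm_nonneg z).trans_lt hz)).mpr hz
  have hsum := hasSum_macdonald_succ hγ₀ hγ₁ (norm_mul_inv_lt_one h) (norm_mul_inv_lt_one h')
  simp only [macdonaldC, inv_inv] at hsum
  exact ⟨hsum.summable, by rw [hsum.tsum_eq, add_sub_cancel]⟩

/-- Let `q > 1` be real and `γ` a complex number of norm one with `γ ≠ 1`.
Then the series `Σ_{i=1}^∞ q^{−i}(γ^i (1−γ⁻¹q⁻¹)/(1−γ⁻¹) + γ^{−i} (1−γq⁻¹)/(1−γ))` converges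
and adding `1` to its sum gives `(1+q⁻¹)(1−q⁻²)/((1−γq⁻¹)(1−γ⁻¹q⁻¹))`. -/
theorem unramified_doubling_series (q : ℝ) (hq : 1 < q) (γ : ℂ)
    (hγ : ‖γ‖ = 1) (hγ1 : γ ≠ 1) :
    Summable (fun i : ℕ =>
        ((q : ℂ))⁻¹ ^ (i + 1) *
          (γ ^ (i + 1) * ((1 - γ⁻¹ * (q : ℂ)⁻¹) / (1 - γ⁻¹)) +
            γ⁻¹ ^ (i + 1) * ((1 - γ * (q : ℂ)⁻¹) / (1 - γ)))) ∧
    1 + (∑' i : ℕ,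
        ((q : ℂ))⁻¹ ^ (i + 1) *
          (γ ^ (i + 1) * ((1 - γ⁻¹ * (q : ℂ)⁻¹) / (1 - γ⁻¹)) +
            γ⁻¹ ^ (i + 1) * ((1 - γ * (q : ℂ)⁻¹) / (1 - γ))))
      = (1 + (q : ℂ)⁻¹) * (1 - (q : ℂ)⁻¹ ^ 2) /
          ((1 - γ * (q : ℂ)⁻¹) * (1 - γ⁻¹ * (q : ℂ)⁻¹)) := by
  have hγq : ‖γ‖ < ‖(q : ℂ)‖ := by
    rwa [hγ, Complex.norm_of_nonneg (zero_le_one.trans hq.le)]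
  exact unramified_doubling_series_general (norm_ne_zero_iff.mp (by simp [hγ])) hγ1 hγq
    (by rwa [norm_inv, hγ, inv_one, ← hγ])
end
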